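/- For the elephant random walk with memory parameter p ∈ [0, 1) on a Cayley graph that is the d-regular tree T_d (d ≥ 3): if p ≤ p_d there exists C > 0 such that E|Ξ_n|^2 ≤ C · r_n^{−2} · log n for all n ≥ 2, and if p > p_d there exists C > 0 such that E|Ξ_n|^2 ≤ C · r_n^{−2} for all n ≥ 1, where r_n = n^{1/2} if p < p_d, r_n = (n / log n)^{1/2} if p = p_d, and r_n = n^{d(1−p)/(d−1)} if p > p_d, with p_d = (d + 1)/(2d). -/

import Mathlib

open MeasureTheory ProbabilityTheory Filter

noncomputable section

/-- The Cayley graph of a group with respect to a finite set of generators. -/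
def cayleyGraph {G : Type*} [Group G] (S : Finset G) : SimpleGraph G where
  Adj x y := x ≠ y ∧ (y * x⁻¹ ∈ S ∨ x * y⁻¹ ∈ S)
  symm := by
    constructor
    rintro x y ⟨h1, h2⟩
    refine ⟨h1.symm, ?_⟩
    rcases h2 with h | h
    · exact Or.inr h
    · exact Or.inl h
  loopless := ⟨fun x h => h.1 rfl⟩

/-- The elephant random walk (ERW) with memory parameter `p` on the Cayley graph of a
group `G` with respect to a symmetric generating set `S` of cardinality `d`, not
containing the identity, whose Cayley graph is a tree (hence the `d`-regular tree
`T_d`).  The steps are `g 1, g 2, …` (the value of `g 0` is irrelevant).  The law of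
the process is characterised by: `g 1` is uniform on `S`, and, conditionally on the
first `n` steps being `s 1, …, s n`, the next step `g (n+1)` equals `a ∈ S` with
probability `p * N/n + ((1-p)/(d-1)) * (n-N)/n`, where `N = #{1 ≤ k ≤ n : s k = a}`;
this is precisely the probability that the walker, recalling a uniform past epoch
`D ∈ {1, …, n}`, repeats `g D` with probability `p` and takes any given other step
with probability `(1-p)/(d-1)`. -/
structure ERW (G : Type*) [Group G] [DecidableEq G] (d : ℕ) (p : ℝ)
    (Ω : Type*) [MeasurableSpace Ω] (P : Measure Ω) where
  S : Finset G
  card_S : S.card = d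
  symm_S : ∀ s ∈ S, s⁻¹ ∈ S
  one_not_mem : (1 : G) ∉ S
  tree : (cayleyGraph S).IsTree
  g : ℕ → Ω → G
  meas_g : ∀ n a, MeasurableSet {ω | g n ω = a}
  mem_S : ∀ n, 1 ≤ n → ∀ ω, g n ω ∈ S
  init : ∀ a ∈ S, (P {ω | g 1 ω = a}).toReal = 1 / d
  update : ∀ n, 1 ≤ n → ∀ s : ℕ → G, ∀ a ∈ S,
    (P ({ω | ∀ k ∈ Finset.Icc 1 n, g k ω = s k} ∩ {ω | g (n + 1) ω = a})).toReal
      = (p * ((((Finset.Icc 1 n).filter fun k => s k = a).card : ℝ) / n)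
          + (1 - p) / ((d : ℝ) - 1)
            * (((n : ℝ) - (((Finset.Icc 1 n).filter fun k => s k = a).card : ℝ)) / n))
        * (P {ω | ∀ k ∈ Finset.Icc 1 n, g k ω = s k}).toReal

namespace ERW

variable {G : Type*} [Group G] [DecidableEq G] {d : ℕ} {p : ℝ}
  {Ω : Type*} [MeasurableSpace Ω] {P : Measure Ω}

/-- The position `w n = g n ⋯ g 1` of the walk at time `n`. -/
def pos (E : ERW G d p Ω P) : ℕ → Ω → G
  | 0 => fun _ => 1
  | n + 1 => fun ω => E.g (n + 1) ω * E.pos n ω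

/-- `Δ n`: the (word-metric) distance of the walker from the root at time `n`. -/
def dist (E : ERW G d p Ω P) (n : ℕ) (ω : Ω) : ℕ :=
  (cayleyGraph E.S).dist 1 (E.pos n ω)

/-- `N n a`: the number of `a`-steps taken by time `n`. -/
def count (E : ERW G d p Ω P) (a : G) (n : ℕ) (ω : Ω) : ℕ :=
  ((Finset.Icc 1 n).filter fun k => E.g k ω = a).card

/-- `γ n`: the unique step decreasing the distance to the root by 1
(a junk value if the walker is at the root). -/
def gammaStep (E : ERW G d p Ω P) (n : ℕ) (ω : Ω) : G :=
  @Classical.epsilon G ⟨1⟩ fun s =>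
    s ∈ E.S ∧ (cayleyGraph E.S).dist 1 (s * E.pos n ω) + 1 = E.dist n ω

/-- `ℓ n = N n (γ n)` if the walker is away from the root, and `0` otherwise. -/
def ell (E : ERW G d p Ω P) (n : ℕ) (ω : Ω) : ℕ :=
  if E.pos n ω = 1 then 0 else E.count (E.gammaStep n ω) n ω

/-- `Ξ n = (1/n) ∑_{k=0}^{n-1} (ℓ k / k - 1(Δ k > 0)/d)` (with the convention
`ℓ 0 / 0 = 0`, automatic since division by zero yields zero). -/
def Xi (E : ERW G d p Ω P) (n : ℕ) (ω : Ω) : ℝ :=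
  (1 / n) * ∑ k ∈ Finset.range n,
    ((E.ell k ω : ℝ) / k - (if 0 < E.dist k ω then 1 else 0) / d)

/-- The natural filtration `F n` generated by the steps up to time `n`. -/
def filt (E : ERW G d p Ω P) (n : ℕ) : MeasurableSpace Ω :=
  ⨆ k ∈ Finset.Icc 1 n, MeasurableSpace.comap (E.g k) ⊤

/-- `G n = E[Δ (n+1) - Δ n | F n]`. -/
def drift (E : ERW G d p Ω P) (n : ℕ) : Ω → ℝ :=
  P[fun ω => ((E.dist (n + 1) ω : ℝ) - (E.dist n ω : ℝ)) | E.filt n]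

/-- The martingale differences `Y k = Δ k - Δ (k-1) - G (k-1)`. -/
def mdiff (E : ERW G d p Ω P) (k : ℕ) (ω : Ω) : ℝ :=
  (E.dist k ω : ℝ) - (E.dist (k - 1) ω : ℝ) - E.drift (k - 1) ω

/-- The martingale `M n = ∑_{k=1}^n Y k`. -/
def mart (E : ERW G d p Ω P) (n : ℕ) (ω : Ω) : ℝ :=
  ∑ k ∈ Finset.Icc 1 n, E.mdiff k ω

end ERW

/-- The rate `r n`: `√n` in the subcritical regime `p < p_d = (d+1)/(2d)`,
`√(n / log n)` in the critical regime `p = p_d`, and `n ^ (d(1-p)/(d-1))` in the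
supercritical regime `p > p_d`. -/
def rate (p : ℝ) (d : ℕ) (n : ℕ) : ℝ :=
  if p < ((d : ℝ) + 1) / (2 * d) then Real.sqrt n
  else if p = ((d : ℝ) + 1) / (2 * d) then Real.sqrt ((n : ℝ) / Real.log n)
  else (n : ℝ) ^ ((d : ℝ) * (1 - p) / ((d : ℝ) - 1))

/-!
Let `X` be the excess of the number of `a`-steps by time `n` over `n / d`. Given the first `n`
steps, the next step equals `a` with probability `1 / d + (c / n) * X`, where
`c = (p * d - 1) / (d - 1)`. Hence the second moment `v` of the excess satisfies
`v (n + 1) ≤ (1 + 2 * c / n) * v n + 1`, so it is of order `n`, `n * log n` or `n ^ (2 * c)`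
according to whether `2 * c` is below, at or above `1`, that is, whether `p` is below, at or
above `(d + 1) / (2 * d)`. Away from the root, the `k`-th summand of `Ξ n` is the excess of the
generator `γ k` divided by `k`, so Cauchy–Schwarz bounds `E |Ξ n| ^ 2` by
`(d / n) * ∑ v k / k ^ 2`.
-/

section RpowTangent

variable {x y s : ℝ}

theorem rpow_add_mul_sub_le_rpow (hx : 0 < x) (hy : 0 ≤ y) (hs : 1 ≤ s) :
    x ^ s + s * x ^ (s - 1) * (y - x) ≤ y ^ s := by
  have bernoulli : 1 + s * (y / x - 1) ≤ (1 + (y / x - 1)) ^ s :=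
    one_add_mul_self_le_rpow_one_add (by linarith [div_nonneg hy hx.le]) hs
  calc x ^ s + s * x ^ (s - 1) * (y - x)
      = x ^ s * (1 + s * (y / x - 1)) := by
        rw [Real.rpow_sub_one hx.ne']
        field_simp
    _ ≤ x ^ s * (1 + (y / x - 1)) ^ s := by gcongr
    _ = y ^ s := by
        rw [add_sub_cancel, ← Real.mul_rpow hx.le (by positivity), mul_div_cancel₀ y hx.ne']

theorem rpow_le_rpow_add_mul_sub (hx : 0 < x) (hy : 0 ≤ y) (hs₀ : 0 ≤ s) (hs₁ : s ≤ 1) :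
    y ^ s ≤ x ^ s + s * x ^ (s - 1) * (y - x) := by
  have bernoulli : (1 + (y / x - 1)) ^ s ≤ 1 + s * (y / x - 1) :=
    rpow_one_add_le_one_add_mul_self (by linarith [div_nonneg hy hx.le]) hs₀ hs₁
  calc y ^ s = x ^ s * (1 + (y / x - 1)) ^ s := by
        rw [add_sub_cancel, ← Real.mul_rpow hx.le (by positivity), mul_div_cancel₀ y hx.ne']
    _ ≤ x ^ s * (1 + s * (y / x - 1)) := by gcongr
    _ = x ^ s + s * x ^ (s - 1) * (y - x) := by
        rw [Real.rpow_sub_one hx.ne']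
        field_simp

theorem sum_Icc_rpow_sub_one_le (hs₀ : 0 < s) (hs₁ : s ≤ 1) (n : ℕ) :
    ∑ k ∈ Finset.Icc 1 n, (k : ℝ) ^ (s - 1) ≤ (n : ℝ) ^ s / s := by
  induction n with
  | zero => simp [Real.zero_rpow hs₀.ne']
  | succ n ih =>
    have tangent := rpow_le_rpow_add_mul_sub (x := (n + 1 : ℕ)) (by positivity) n.cast_nonneg
      hs₀.le hs₁
    rw [Finset.sum_Icc_succ_top (by lia)]
    rw [le_div_iff₀ hs₀] at ih ⊢
    push_cast at tangent ⊢
    linarith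

end RpowTangent

section Harmonic

theorem cast_harmonic_eq_sum_Icc (n : ℕ) :
    (harmonic n : ℝ) = ∑ k ∈ Finset.Icc 1 n, (k : ℝ)⁻¹ := by
  simp [harmonic_eq_sum_Icc]

theorem monotone_harmonic : Monotone harmonic :=
  monotone_nat_of_le_succ fun n => by
    rw [harmonic_succ]
    exact le_add_of_nonneg_right (by positivity)

theorem harmonic_le_three_mul_log {n : ℕ} (hn : 2 ≤ n) : (harmonic n : ℝ) ≤ 3 * Real.log n := by
  have log_two_le : Real.log 2 ≤ Real.log n :=
    Real.log_le_log two_pos (by exact_mod_cast hn)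
  linarith [harmonic_le_one_add_log n, Real.log_two_gt_d9]

end Harmonic

/-- The growth condition satisfied by the second moment of a centered step count of the elephant
random walk; `β` is twice its memory coefficient. Only the terms `x n` with `1 ≤ n` are
constrained. -/
structure HasMemoryGrowth (β : ℝ) (x : ℕ → ℝ) : Prop where
  one_le : x 1 ≤ 1
  succ_le : ∀ n : ℕ, 1 ≤ n → x (n + 1) ≤ (1 + β / n) * x n + 1

namespace HasMemoryGrowth

variable {β : ℝ} {x : ℕ → ℝ} {n : ℕ}

theorem le_of_supersolution (h : HasMemoryGrowth β x) (hβ : 0 ≤ β) {y : ℕ → ℝ} (hy₁ : 1 ≤ y 1)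
    (hy : ∀ n : ℕ, 1 ≤ n → (1 + β / n) * y n + 1 ≤ y (n + 1)) (hn : 1 ≤ n) : x n ≤ y n := by
  induction n, hn using Nat.le_induction with
  | base => exact h.one_le.trans hy₁
  | succ n hn ih =>
    calc x (n + 1) ≤ (1 + β / n) * x n + 1 := h.succ_le n hn
      _ ≤ (1 + β / n) * y n + 1 := by gcongr
      _ ≤ y (n + 1) := hy n hn

theorem le_div_one_sub (h : HasMemoryGrowth β x) (hβ₀ : 0 ≤ β) (hβ₁ : β < 1) (hn : 1 ≤ n) :
    x n ≤ n / (1 - β) := by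
  have hβ : 0 < 1 - β := sub_pos.2 hβ₁
  refine h.le_of_supersolution (y := fun n => n / (1 - β)) hβ₀ ?_ (fun m hm => le_of_eq ?_) hn
  · rw [Nat.cast_one, le_div_iff₀ hβ]
    linarith
  · push_cast
    field_simp
    ring

theorem le_mul_harmonic (h : HasMemoryGrowth 1 x) (hn : 1 ≤ n) : x n ≤ n * harmonic n := by
  refine h.le_of_supersolution (y := fun n => n * harmonic n) zero_le_one (by simp)
    (fun m hm => le_of_eq ?_) hn
  rw [harmonic_succ]
  push_cast
  field_simp

theorem le_mul_rpow (h : HasMemoryGrowth β x) (hβ : 1 < β) (hn : 1 ≤ n) :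
    x n ≤ β / (β - 1) * (n : ℝ) ^ β := by
  have hβ' : 0 < β - 1 := sub_pos.2 hβ
  -- The linear correction absorbs the additive term `1` of the recursion.
  have bound : x n ≤ β / (β - 1) * (n : ℝ) ^ β - n / (β - 1) := by
    refine h.le_of_supersolution (y := fun n => β / (β - 1) * (n : ℝ) ^ β - n / (β - 1))
      (by linarith) (le_of_eq ?_) (fun m hm => ?_) hn
    · simp only [Nat.cast_one, Real.one_rpow]
      field_simp
    · have hm₀ : (0 : ℝ) < m := by exact_mod_cast hm
      calc (1 + β / m) * (β / (β - 1) * (m : ℝ) ^ β - m / (β - 1)) + 1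
          = β / (β - 1) * ((m : ℝ) ^ β + β * (m : ℝ) ^ (β - 1) * ((m + 1) - m))
              - (m + 1) / (β - 1) := by
            rw [Real.rpow_sub_one hm₀.ne']
            field_simp
            ring
        _ ≤ β / (β - 1) * (m + 1 : ℝ) ^ β - (m + 1) / (β - 1) := by
            gcongr
            exact rpow_add_mul_sub_le_rpow hm₀ (by positivity) hβ.le
        _ = β / (β - 1) * ((m + 1 : ℕ) : ℝ) ^ β - (m + 1 : ℕ) / (β - 1) := by push_cast; rfl
  exact bound.trans (sub_le_self _ (by positivity))

theorem sum_div_sq_le_harmonic_div (h : HasMemoryGrowth β x) (hβ₀ : 0 ≤ β) (hβ₁ : β < 1) :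
    ∑ k ∈ Finset.Icc 1 n, x k / (k : ℝ) ^ 2 ≤ harmonic n / (1 - β) := by
  rw [cast_harmonic_eq_sum_Icc, Finset.sum_div]
  refine Finset.sum_le_sum fun k hk => ?_
  have hk₁ : 1 ≤ k := (Finset.mem_Icc.1 hk).1
  calc x k / (k : ℝ) ^ 2 ≤ k / (1 - β) / (k : ℝ) ^ 2 := by
        gcongr
        exact h.le_div_one_sub hβ₀ hβ₁ hk₁
    _ = (k : ℝ)⁻¹ / (1 - β) := by field_simp

theorem sum_div_sq_le_harmonic_sq (h : HasMemoryGrowth 1 x) :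
    ∑ k ∈ Finset.Icc 1 n, x k / (k : ℝ) ^ 2 ≤ (harmonic n : ℝ) ^ 2 := by
  rw [sq]
  nth_rw 2 [cast_harmonic_eq_sum_Icc]
  rw [Finset.mul_sum]
  refine Finset.sum_le_sum fun k hk => ?_
  obtain ⟨hk₁, hkn⟩ := Finset.mem_Icc.1 hk
  calc x k / (k : ℝ) ^ 2 ≤ k * harmonic k / (k : ℝ) ^ 2 := by
        gcongr
        exact h.le_mul_harmonic hk₁
    _ = harmonic k * (k : ℝ)⁻¹ := by field_simp
    _ ≤ harmonic n * (k : ℝ)⁻¹ := by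
        gcongr
        exact_mod_cast monotone_harmonic hkn

theorem sum_div_sq_le_rpow (h : HasMemoryGrowth β x) (hβ₁ : 1 < β) (hβ₂ : β ≤ 2) :
    ∑ k ∈ Finset.Icc 1 n, x k / (k : ℝ) ^ 2
      ≤ β / (β - 1) * ((n : ℝ) ^ (β - 1) / (β - 1)) := by
  have hβ : 0 < β - 1 := sub_pos.2 hβ₁
  have term_le : ∀ k ∈ Finset.Icc 1 n,
      x k / (k : ℝ) ^ 2 ≤ β / (β - 1) * (k : ℝ) ^ (β - 1 - 1) := fun k hk => by
    have hk₁ : 1 ≤ k := (Finset.mem_Icc.1 hk).1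
    have hk₀ : (k : ℝ) ≠ 0 := by positivity
    calc x k / (k : ℝ) ^ 2 ≤ β / (β - 1) * (k : ℝ) ^ β / (k : ℝ) ^ 2 := by
          gcongr
          exact h.le_mul_rpow hβ₁ hk₁
      _ = β / (β - 1) * (k : ℝ) ^ (β - 1 - 1) := by
          rw [Real.rpow_sub_one hk₀, Real.rpow_sub_one hk₀]
          field_simp
  refine (Finset.sum_le_sum term_le).trans ?_
  rw [← Finset.mul_sum]
  gcongr
  exact sum_Icc_rpow_sub_one_le hβ (by linarith) n

end HasMemoryGrowth

section FiniteFactor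

variable {Ω T : Type*} [MeasurableSpace Ω] {μ : Measure Ω} [IsFiniteMeasure μ]
  {H : Ω → T} {f q : Ω → ℝ}

theorem integrable_of_factorsThrough [Finite T] (hH : ∀ t, MeasurableSet (H ⁻¹' {t}))
    (hf : f.FactorsThrough H) : Integrable f μ := by
  obtain ⟨F, rfl⟩ := (Function.factorsThrough_iff f).1 hf
  let _ : MeasurableSpace T := ⊤
  exact Integrable.of_finite.comp_measurable (measurable_to_countable' hH)

theorem integral_comp_eq_sum_fibers [Fintype T] (hH : ∀ t, MeasurableSet (H ⁻¹' {t}))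
    (F : T → ℝ) : ∫ ω, F (H ω) ∂μ = ∑ t, μ.real (H ⁻¹' {t}) * F t := by
  let _ : MeasurableSpace T := ⊤
  have hH' : Measurable H := measurable_to_countable' hH
  rw [← integral_map hH'.aemeasurable (measurable_of_finite F).aestronglyMeasurable,
    integral_fintype .of_finite]
  exact Finset.sum_congr rfl fun t _ => by
    rw [map_measureReal_apply hH' (measurableSet_singleton t), smul_eq_mul]

theorem setIntegral_eq_integral_mul_of_fibers [Finite T] {B : Set Ω}
    (hH : ∀ t, MeasurableSet (H ⁻¹' {t})) (hf : f.FactorsThrough H) (hq : q.FactorsThrough H)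
    (hB : ∀ ω, μ.real (H ⁻¹' {H ω} ∩ B) = q ω * μ.real (H ⁻¹' {H ω})) :
    ∫ ω in B, f ω ∂μ = ∫ ω, q ω * f ω ∂μ := by
  cases nonempty_fintype T
  obtain ⟨F, rfl⟩ := (Function.factorsThrough_iff f).1 hf
  obtain ⟨Q, rfl⟩ := (Function.factorsThrough_iff q).1 hq
  have fiber (t : T) : μ.real (H ⁻¹' {t} ∩ B) = Q t * μ.real (H ⁻¹' {t}) := by
    rcases (H ⁻¹' {t}).eq_empty_or_nonempty with empty | ⟨ω, rfl⟩
    · simp [empty]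
    · exact hB ω
  calc ∫ ω in B, F (H ω) ∂μ = ∑ t, μ.real (H ⁻¹' {t} ∩ B) * F t := by
        rw [integral_comp_eq_sum_fibers hH]
        simp only [measureReal_restrict_apply (hH _)]
    _ = ∑ t, μ.real (H ⁻¹' {t}) * (Q t * F t) :=
        Finset.sum_congr rfl fun t _ => by rw [fiber]; ring
    _ = ∫ ω, Q (H ω) * F (H ω) ∂μ :=
        (integral_comp_eq_sum_fibers hH fun t => Q t * F t).symm

end FiniteFactor

section CayleyGraph

theorem exists_adj_dist_add_one_eq {V : Type*} {Γ : SimpleGraph V} (hΓ : Γ.Connected) {u v : V}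
    (h : v ≠ u) : ∃ w, Γ.Adj v w ∧ Γ.dist u w + 1 = Γ.dist u v := by
  obtain ⟨geodesic, length_eq⟩ := hΓ.exists_walk_length_eq_dist v u
  obtain ⟨w, hadj, tail, rfl⟩ :=
    SimpleGraph.Walk.not_nil_iff.1 fun hnil : geodesic.Nil => h hnil.eq
  refine ⟨w, hadj, ?_⟩
  have tail_ge : Γ.dist w u ≤ tail.length := SimpleGraph.dist_le tail
  have triangle : Γ.dist v u ≤ Γ.dist v w + Γ.dist w u := hΓ.dist_triangle
  rw [SimpleGraph.dist_eq_one_iff_adj.2 hadj] at triangle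
  rw [SimpleGraph.Walk.length_cons] at length_eq
  rw [SimpleGraph.dist_comm (u := u), SimpleGraph.dist_comm (u := u)]
  lia

theorem mul_inv_mem_of_cayleyGraph_adj {G : Type*} [Group G] {S : Finset G}
    (hS : ∀ s ∈ S, s⁻¹ ∈ S) {x y : G} (h : (cayleyGraph S).Adj x y) : y * x⁻¹ ∈ S := by
  rcases h.2 with hyx | hxy
  · exact hyx
  · simpa using hS _ hxy

end CayleyGraph

section MemoryCoefficient

/-- The memory coefficient `(p * d - 1) / (d - 1)` of the elephant random walk: the factor by which
an excess frequency of a generator in the past biases the next step towards that generator. -/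
def memoryCoeff (p : ℝ) (d : ℕ) : ℝ := (p * d - 1) / (d - 1)

variable {p : ℝ} {d : ℕ}

theorem recall_prob_eq (hd : 2 ≤ d) {n : ℕ} (hn : 1 ≤ n) (N : ℝ) :
    p * (N / n) + (1 - p) / ((d : ℝ) - 1) * ((n - N) / n)
      = 1 / d + memoryCoeff p d / n * (N - n / d) := by
  have hd₁ : (d : ℝ) - 1 ≠ 0 := sub_ne_zero.2 (by exact_mod_cast (by lia : d ≠ 1))
  rw [memoryCoeff]
  field_simp
  ring

theorem two_mul_memoryCoeff_sub_one (hd : 2 ≤ d) :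
    2 * memoryCoeff p d - 1 = 2 * d / (d - 1) * (p - (d + 1) / (2 * d)) := by
  have hd₁ : (d : ℝ) - 1 ≠ 0 := sub_ne_zero.2 (by exact_mod_cast (by lia : d ≠ 1))
  rw [memoryCoeff]
  field_simp
  ring

theorem two_mul_cast_div_cast_sub_one_pos (hd : 2 ≤ d) : (0 : ℝ) < 2 * d / (d - 1) :=
  div_pos (by positivity) (sub_pos.2 (by exact_mod_cast hd))

theorem two_mul_memoryCoeff_lt_one (hd : 2 ≤ d) (hp : p < ((d : ℝ) + 1) / (2 * d)) :
    2 * memoryCoeff p d < 1 := by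
  rw [← sub_neg, two_mul_memoryCoeff_sub_one hd]
  exact mul_neg_of_pos_of_neg (two_mul_cast_div_cast_sub_one_pos hd) (sub_neg.2 hp)

theorem two_mul_memoryCoeff_eq_one (hd : 2 ≤ d) (hp : p = ((d : ℝ) + 1) / (2 * d)) :
    2 * memoryCoeff p d = 1 := by
  rw [← sub_eq_zero, two_mul_memoryCoeff_sub_one hd, hp, sub_self, mul_zero]

theorem one_lt_two_mul_memoryCoeff (hd : 2 ≤ d) (hp : ((d : ℝ) + 1) / (2 * d) < p) :
    1 < 2 * memoryCoeff p d := by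
  rw [← sub_pos, two_mul_memoryCoeff_sub_one hd]
  exact mul_pos (two_mul_cast_div_cast_sub_one_pos hd) (sub_pos.2 hp)

theorem memoryCoeff_le_one (hd : 2 ≤ d) (hp : p ≤ 1) : memoryCoeff p d ≤ 1 := by
  have hd₁ : (0 : ℝ) < d - 1 := sub_pos.2 (by exact_mod_cast hd)
  rw [memoryCoeff, div_le_one hd₁]
  exact sub_le_sub_right (mul_le_of_le_one_left d.cast_nonneg hp) 1

theorem rate_sq_of_lt (hp : p < ((d : ℝ) + 1) / (2 * d)) (n : ℕ) : rate p d n ^ 2 = n := by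
  rw [rate, if_pos hp, Real.sq_sqrt n.cast_nonneg]

theorem rate_sq_of_eq (hp : p = ((d : ℝ) + 1) / (2 * d)) (n : ℕ) :
    rate p d n ^ 2 = n / Real.log n := by
  rw [rate, if_neg hp.not_lt, if_pos hp,
    Real.sq_sqrt (div_nonneg n.cast_nonneg (Real.log_natCast_nonneg n))]

theorem rate_sq_of_gt (hd : 2 ≤ d) (hp : ((d : ℝ) + 1) / (2 * d) < p) {n : ℕ} (hn : 1 ≤ n) :
    rate p d n ^ 2 = n / (n : ℝ) ^ (2 * memoryCoeff p d - 1) := by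
  have hn₀ : (0 : ℝ) < n := by exact_mod_cast hn
  have hd₁ : (d : ℝ) - 1 ≠ 0 := sub_ne_zero.2 (by exact_mod_cast (by lia : d ≠ 1))
  have exponent : (d : ℝ) * (1 - p) / (d - 1) * 2 = 1 - (2 * memoryCoeff p d - 1) := by
    rw [memoryCoeff]
    field_simp
    ring
  rw [rate, if_neg hp.not_gt, if_neg hp.ne', ← Real.rpow_mul_natCast hn₀.le, Nat.cast_two, exponent,
    Real.rpow_sub hn₀, Real.rpow_one]

end MemoryCoefficient

namespace ERW

variable {G : Type*} [Group G] [DecidableEq G] {d : ℕ} {p : ℝ}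
  {Ω : Type*} [MeasurableSpace Ω] {P : Measure Ω} (E : ERW G d p Ω P)

/-- The sequence of the first `n` steps. It takes finitely many values, so functions of it are
integrable and their integrals are finite sums. -/
def history (n : ℕ) (ω : Ω) (k : Finset.Icc 1 n) : E.S :=
  ⟨E.g k ω, E.mem_S k (Finset.mem_Icc.1 k.2).1 ω⟩

/-- The deviation of the indicator of an `a`-step at time `n` from the uniform frequency. -/
def centeredStep (a : G) (n : ℕ) (ω : Ω) : ℝ := (if E.g n ω = a then 1 else 0) - 1 / d

/-- The deviation of the number of `a`-steps by time `n` from the uniform share `n / d`. -/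
def excess (a : G) (n : ℕ) (ω : Ω) : ℝ := E.count a n ω - n / d

/-- The second moment of the excess of `a`-steps by time `n`. -/
def excessSecondMoment (a : G) (n : ℕ) : ℝ := ∫ ω, E.excess a n ω ^ 2 ∂P

theorem history_eq_iff {n : ℕ} {ω ω' : Ω} :
    E.history n ω = E.history n ω' ↔ ∀ k ∈ Finset.Icc 1 n, E.g k ω = E.g k ω' := by
  simp [funext_iff, history, Subtype.ext_iff]

theorem measurableSet_history_preimage (n : ℕ) (t : Finset.Icc 1 n → E.S) :
    MeasurableSet (E.history n ⁻¹' {t}) := by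
  have : E.history n ⁻¹' {t} = ⋂ k : Finset.Icc 1 n, {ω | E.g k ω = t k} := by
    ext ω
    simp [funext_iff, history, Subtype.ext_iff]
  rw [this]
  exact MeasurableSet.iInter fun k => E.meas_g k (t k)

theorem count_factorsThrough_history (a : G) {m n : ℕ} (hmn : m ≤ n) :
    (E.count a m).FactorsThrough (E.history n) := fun ω ω' h => by
  rw [count, count]
  congr 1
  refine Finset.filter_congr fun k hk => ?_
  rw [E.history_eq_iff.1 h k (Finset.Icc_subset_Icc_right hmn hk)]

theorem excess_factorsThrough_history (a : G) {m n : ℕ} (hmn : m ≤ n) :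
    (E.excess a m).FactorsThrough (E.history n) := fun ω ω' h => by
  rw [excess, excess, E.count_factorsThrough_history a hmn h]

theorem centeredStep_factorsThrough_history (a : G) {n : ℕ} (hn : 1 ≤ n) :
    (E.centeredStep a n).FactorsThrough (E.history n) := fun ω ω' h => by
  rw [centeredStep, centeredStep, E.history_eq_iff.1 h n (Finset.right_mem_Icc.2 hn)]

theorem integrable_excess_sq [IsFiniteMeasure P] (a : G) (n : ℕ) :
    Integrable (fun ω => E.excess a n ω ^ 2) P :=
  integrable_of_factorsThrough (E.measurableSet_history_preimage n) fun _ _ h => by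
    rw [E.excess_factorsThrough_history a le_rfl h]

theorem integrable_excess_mul_centeredStep [IsFiniteMeasure P] (a : G) (n : ℕ) :
    Integrable (fun ω => E.excess a n ω * E.centeredStep a (n + 1) ω) P :=
  integrable_of_factorsThrough (E.measurableSet_history_preimage (n + 1)) fun _ _ h => by
    rw [E.excess_factorsThrough_history a n.le_succ h,
      E.centeredStep_factorsThrough_history a n.succ_pos h]

theorem excess_zero (a : G) (ω : Ω) : E.excess a 0 ω = 0 := by
  simp [excess, count]

theorem excess_succ (a : G) (n : ℕ) (ω : Ω) :
    E.excess a (n + 1) ω = E.excess a n ω + E.centeredStep a (n + 1) ω := by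
  simp only [excess, centeredStep, count, Finset.natCast_card_filter]
  rw [Finset.sum_Icc_succ_top (by lia)]
  push_cast
  ring

theorem centeredStep_sq_le_one (a : G) (n : ℕ) (ω : Ω) : E.centeredStep a n ω ^ 2 ≤ 1 := by
  have inv_nonneg : (0 : ℝ) ≤ 1 / d := by positivity
  have inv_le_one : (1 : ℝ) / d ≤ 1 := by simpa using Nat.cast_inv_le_one (α := ℝ) d
  rw [sq_le_one_iff_abs_le_one, centeredStep, abs_le]
  split_ifs <;> constructor <;> linarith

theorem measureReal_history_inter_step (hd : 2 ≤ d) {n : ℕ} (hn : 1 ≤ n) {a : G} (ha : a ∈ E.S)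
    (ω : Ω) :
    P.real (E.history n ⁻¹' {E.history n ω} ∩ {ω' | E.g (n + 1) ω' = a})
      = (1 / d + memoryCoeff p d / n * E.excess a n ω)
        * P.real (E.history n ⁻¹' {E.history n ω}) := by
  have cylinder : E.history n ⁻¹' {E.history n ω}
      = {ω' | ∀ k ∈ Finset.Icc 1 n, E.g k ω' = E.g k ω} :=
    Set.ext fun ω' => E.history_eq_iff
  rw [cylinder, excess, ← recall_prob_eq hd hn]
  exact E.update n hn (fun k => E.g k ω) a ha

theorem integral_mul_centeredStep_succ [IsFiniteMeasure P] (hd : 2 ≤ d) {n : ℕ} (hn : 1 ≤ n)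
    {a : G} (ha : a ∈ E.S) {f : Ω → ℝ} (hf : f.FactorsThrough (E.history n)) :
    ∫ ω, f ω * E.centeredStep a (n + 1) ω ∂P
      = memoryCoeff p d / n * ∫ ω, f ω * E.excess a n ω ∂P := by
  have hH := E.measurableSet_history_preimage n
  have hX := E.excess_factorsThrough_history a (le_refl n)
  have hB : MeasurableSet {ω | E.g (n + 1) ω = a} := E.meas_g (n + 1) a
  have hf_int : Integrable f P := integrable_of_factorsThrough hH hf
  have hfX_int : Integrable (fun ω => f ω * E.excess a n ω) P :=
    integrable_of_factorsThrough hH fun _ _ h => by rw [hf h, hX h]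
  have conditioning : ∫ ω in {ω | E.g (n + 1) ω = a}, f ω ∂P
      = ∫ ω, (1 / d + memoryCoeff p d / n * E.excess a n ω) * f ω ∂P :=
    setIntegral_eq_integral_mul_of_fibers hH hf (fun _ _ h => by rw [hX h])
      (E.measureReal_history_inter_step hd hn ha)
  calc ∫ ω, f ω * E.centeredStep a (n + 1) ω ∂P
      = ∫ ω, ({ω | E.g (n + 1) ω = a}.indicator f ω - 1 / d * f ω) ∂P := by
        refine integral_congr_ae (.of_forall fun ω => ?_)
        simp only [centeredStep, Set.indicator_apply, Set.mem_ofPred_eq]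
        split_ifs <;> ring
    _ = ∫ ω, (1 / d + memoryCoeff p d / n * E.excess a n ω) * f ω ∂P - ∫ ω, 1 / d * f ω ∂P := by
        rw [integral_sub (hf_int.indicator hB) (hf_int.const_mul _), integral_indicator hB,
          conditioning]
    _ = ∫ ω, memoryCoeff p d / n * (f ω * E.excess a n ω) ∂P := by
        rw [sub_eq_iff_eq_add, ← integral_add (hfX_int.const_mul _) (hf_int.const_mul _)]
        congr 1 with ω
        ring
    _ = memoryCoeff p d / n * ∫ ω, f ω * E.excess a n ω ∂P := integral_const_mul _ _

theorem excessSecondMoment_nonneg (a : G) (n : ℕ) : 0 ≤ E.excessSecondMoment a n :=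
  integral_nonneg fun _ => sq_nonneg _

theorem excessSecondMoment_succ_le [IsProbabilityMeasure P] (hd : 2 ≤ d) {n : ℕ} (hn : 1 ≤ n)
    {a : G} (ha : a ∈ E.S) :
    E.excessSecondMoment a (n + 1)
      ≤ (1 + 2 * memoryCoeff p d / n) * E.excessSecondMoment a n + 1 := by
  have sq_int := E.integrable_excess_sq a n
  have cross_int := (E.integrable_excess_mul_centeredStep a n).const_mul 2
  have sum_int : Integrable (fun ω => E.excess a n ω ^ 2
      + 2 * (E.excess a n ω * E.centeredStep a (n + 1) ω)) P := sq_int.add cross_int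
  have cross : ∫ ω, E.excess a n ω * E.centeredStep a (n + 1) ω ∂P
      = memoryCoeff p d / n * E.excessSecondMoment a n := by
    rw [E.integral_mul_centeredStep_succ hd hn ha (E.excess_factorsThrough_history a le_rfl),
      excessSecondMoment]
    simp only [sq]
  calc E.excessSecondMoment a (n + 1)
      ≤ ∫ ω, (E.excess a n ω ^ 2 + 2 * (E.excess a n ω * E.centeredStep a (n + 1) ω) + 1) ∂P := by
        refine integral_mono (E.integrable_excess_sq a (n + 1))
          (sum_int.add (integrable_const 1)) fun ω => ?_
        simp only [E.excess_succ]
        linarith [E.centeredStep_sq_le_one a (n + 1) ω]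
    _ = E.excessSecondMoment a n + 2 * (memoryCoeff p d / n * E.excessSecondMoment a n) + 1 := by
        rw [integral_add sum_int (integrable_const 1),
          integral_add sq_int cross_int, integral_const_mul, cross, excessSecondMoment]
        simp
    _ = (1 + 2 * memoryCoeff p d / n) * E.excessSecondMoment a n + 1 := by ring

theorem hasMemoryGrowth_excessSecondMoment [IsProbabilityMeasure P] (hd : 2 ≤ d) {a : G}
    (ha : a ∈ E.S) {β : ℝ} (hβ : 2 * memoryCoeff p d ≤ β) :
    HasMemoryGrowth β (E.excessSecondMoment a) where
  one_le := by
    have excess_sq_le (ω : Ω) : E.excess a 1 ω ^ 2 ≤ 1 := by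
      rw [E.excess_succ, E.excess_zero, zero_add]
      exact E.centeredStep_sq_le_one a 1 ω
    calc E.excessSecondMoment a 1 ≤ ∫ _, (1 : ℝ) ∂P :=
          integral_mono (E.integrable_excess_sq a 1) (integrable_const 1) excess_sq_le
      _ = 1 := by simp
  succ_le n hn := by
    refine (E.excessSecondMoment_succ_le hd hn ha).trans ?_
    have := E.excessSecondMoment_nonneg a n
    gcongr

theorem dist_pos_iff {n : ℕ} {ω : Ω} : 0 < E.dist n ω ↔ E.pos n ω ≠ 1 := by
  rw [Nat.pos_iff_ne_zero, dist, Ne, E.tree.connected.dist_eq_zero_iff, eq_comm]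

theorem gammaStep_mem {n : ℕ} {ω : Ω} (h : E.pos n ω ≠ 1) : E.gammaStep n ω ∈ E.S := by
  obtain ⟨y, hadj, hdist⟩ := exists_adj_dist_add_one_eq E.tree.connected h
  have hex : ∃ s, s ∈ E.S ∧ (cayleyGraph E.S).dist 1 (s * E.pos n ω) + 1 = E.dist n ω :=
    ⟨y * (E.pos n ω)⁻¹, mul_inv_mem_of_cayleyGraph_adj E.symm_S hadj, by
      rwa [inv_mul_cancel_right]⟩
  exact (Classical.epsilon_spec hex).1

theorem sq_ell_div_sub_le (k : ℕ) (ω : Ω) :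
    ((E.ell k ω : ℝ) / k - (if 0 < E.dist k ω then 1 else 0) / d) ^ 2
      ≤ ∑ a ∈ E.S, E.excess a k ω ^ 2 / (k : ℝ) ^ 2 := by
  have term_nonneg : ∀ a ∈ E.S, 0 ≤ E.excess a k ω ^ 2 / (k : ℝ) ^ 2 := fun a _ => by positivity
  by_cases h : E.pos k ω = 1
  · have : ¬ 0 < E.dist k ω := fun h' => E.dist_pos_iff.1 h' h
    simpa [ell, h, this] using Finset.sum_nonneg term_nonneg
  · have hk : k ≠ 0 := by
      rintro rfl
      exact h rfl
    rw [ell, if_neg h, if_pos (E.dist_pos_iff.2 h)]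
    calc ((E.count (E.gammaStep k ω) k ω : ℝ) / k - 1 / d) ^ 2
        = E.excess (E.gammaStep k ω) k ω ^ 2 / (k : ℝ) ^ 2 := by
          rw [excess, ← div_pow]
          congr 1
          field_simp
      _ ≤ ∑ a ∈ E.S, E.excess a k ω ^ 2 / (k : ℝ) ^ 2 :=
          Finset.single_le_sum term_nonneg (E.gammaStep_mem h)

theorem Xi_sq_le (n : ℕ) (ω : Ω) :
    |E.Xi n ω| ^ 2 ≤ (∑ k ∈ Finset.Icc 1 n, ∑ a ∈ E.S, E.excess a k ω ^ 2 / (k : ℝ) ^ 2) / n := by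
  let f (k : ℕ) : ℝ := (E.ell k ω : ℝ) / k - (if 0 < E.dist k ω then 1 else 0) / d
  calc |E.Xi n ω| ^ 2
      = ((∑ k ∈ Finset.range n, f k) / n) ^ 2 := by rw [sq_abs, Xi, one_div, inv_mul_eq_div]
    _ ≤ (∑ k ∈ Finset.range n, f k ^ 2) / n := by
        simpa only [Finset.card_range] using
          sum_div_card_sq_le_sum_sq_div_card (s := Finset.range n) (f := f)
    _ ≤ (∑ k ∈ Finset.range (n + 1), ∑ a ∈ E.S, E.excess a k ω ^ 2 / (k : ℝ) ^ 2) / n := by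
        gcongr
        refine (Finset.sum_le_sum fun k _ => E.sq_ell_div_sub_le k ω).trans ?_
        exact Finset.sum_le_sum_of_subset_of_nonneg (Finset.range_subset_range.2 n.le_succ)
          fun k _ _ => by positivity
    _ = (∑ k ∈ Finset.Icc 1 n, ∑ a ∈ E.S, E.excess a k ω ^ 2 / (k : ℝ) ^ 2) / n := by
        rw [Finset.sum_range_eq_add_Ico _ n.add_one_pos, Finset.Ico_add_one_right_eq_Icc]
        simp [E.excess_zero]

theorem integral_Xi_sq_le [IsFiniteMeasure P] {n : ℕ} {B : ℝ}
    (hB : ∀ a ∈ E.S, ∑ k ∈ Finset.Icc 1 n, E.excessSecondMoment a k / (k : ℝ) ^ 2 ≤ B) :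
    ∫ ω, |E.Xi n ω| ^ 2 ∂P ≤ d / n * B := by
  have term_int (k : ℕ) (a : G) : Integrable (fun ω => E.excess a k ω ^ 2 / (k : ℝ) ^ 2) P :=
    (E.integrable_excess_sq a k).div_const _
  have sum_int (k : ℕ) : Integrable (fun ω => ∑ a ∈ E.S, E.excess a k ω ^ 2 / (k : ℝ) ^ 2) P :=
    integrable_finsetSum _ fun a _ => term_int k a
  calc ∫ ω, |E.Xi n ω| ^ 2 ∂P
      ≤ ∫ ω, (∑ k ∈ Finset.Icc 1 n, ∑ a ∈ E.S, E.excess a k ω ^ 2 / (k : ℝ) ^ 2) / n ∂P :=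
        integral_mono_of_nonneg (.of_forall fun ω => by positivity)
          ((integrable_finsetSum _ fun k _ => sum_int k).div_const _)
          (.of_forall (E.Xi_sq_le n))
    _ = (∑ a ∈ E.S, ∑ k ∈ Finset.Icc 1 n, E.excessSecondMoment a k / (k : ℝ) ^ 2) / n := by
        rw [integral_div, integral_finsetSum _ fun k _ => sum_int k, Finset.sum_comm]
        simp only [integral_finsetSum _ fun a _ => term_int _ a, integral_div, excessSecondMoment]
    _ ≤ (∑ _a ∈ E.S, B) / n := by
        gcongr with a ha
        exact hB a ha
    _ = d / n * B := by
        rw [Finset.sum_const, E.card_S, nsmul_eq_mul]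
        ring

variable [IsProbabilityMeasure P]

theorem exists_rate_sq_mul_integral_Xi_sq_le_of_lt (hd : 2 ≤ d)
    (hp : p < ((d : ℝ) + 1) / (2 * d)) :
    ∃ C : ℝ, 0 < C ∧ ∀ n : ℕ, 2 ≤ n →
      rate p d n ^ 2 * ∫ ω, |E.Xi n ω| ^ 2 ∂P ≤ C * Real.log n := by
  set β := max (2 * memoryCoeff p d) 0
  have hβ₀ : 0 ≤ β := le_max_right _ _
  have hβ₁ : β < 1 := max_lt (two_mul_memoryCoeff_lt_one hd hp) one_pos
  have hβ : 0 < 1 - β := sub_pos.2 hβ₁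
  refine ⟨3 * d / (1 - β), by positivity, fun n hn => ?_⟩
  have second_moment := E.integral_Xi_sq_le (n := n) fun a ha =>
    (E.hasMemoryGrowth_excessSecondMoment hd ha (le_max_left _ 0)).sum_div_sq_le_harmonic_div
      hβ₀ hβ₁
  calc rate p d n ^ 2 * ∫ ω, |E.Xi n ω| ^ 2 ∂P
      ≤ n * (d / n * (harmonic n / (1 - β))) := by
        rw [rate_sq_of_lt hp]
        gcongr
    _ ≤ n * (d / n * (3 * Real.log n / (1 - β))) := by
        gcongr
        exact harmonic_le_three_mul_log hn
    _ = 3 * d / (1 - β) * Real.log n := by field_simp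

theorem exists_rate_sq_mul_integral_Xi_sq_le_of_eq (hd : 2 ≤ d)
    (hp : p = ((d : ℝ) + 1) / (2 * d)) :
    ∃ C : ℝ, 0 < C ∧ ∀ n : ℕ, 2 ≤ n →
      rate p d n ^ 2 * ∫ ω, |E.Xi n ω| ^ 2 ∂P ≤ C * Real.log n := by
  refine ⟨9 * d, by positivity, fun n hn => ?_⟩
  have hlog : 0 < Real.log n := Real.log_pos (by exact_mod_cast hn)
  have second_moment := E.integral_Xi_sq_le (n := n) fun a ha =>
    (E.hasMemoryGrowth_excessSecondMoment hd ha
      (two_mul_memoryCoeff_eq_one hd hp).le).sum_div_sq_le_harmonic_sq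
  calc rate p d n ^ 2 * ∫ ω, |E.Xi n ω| ^ 2 ∂P
      ≤ n / Real.log n * (d / n * (harmonic n : ℝ) ^ 2) := by
        rw [rate_sq_of_eq hp]
        gcongr
    _ ≤ n / Real.log n * (d / n * (3 * Real.log n) ^ 2) := by
        have harmonic_nonneg : (0 : ℝ) ≤ harmonic n := by
          exact_mod_cast (harmonic_pos (by lia)).le
        gcongr
        exact harmonic_le_three_mul_log hn
    _ = 9 * d * Real.log n := by
        field_simp
        ring

theorem exists_rate_sq_mul_integral_Xi_sq_le_of_gt (hd : 2 ≤ d) (hp₁ : p ≤ 1)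
    (hp : ((d : ℝ) + 1) / (2 * d) < p) :
    ∃ C : ℝ, 0 < C ∧ ∀ n : ℕ, 1 ≤ n →
      rate p d n ^ 2 * ∫ ω, |E.Xi n ω| ^ 2 ∂P ≤ C := by
  set β := 2 * memoryCoeff p d with β_def
  have hβ₁ : 1 < β := one_lt_two_mul_memoryCoeff hd hp
  have hβ₂ : β ≤ 2 := by linarith [memoryCoeff_le_one hd hp₁]
  have hβ : 0 < β - 1 := sub_pos.2 hβ₁
  refine ⟨d * β / (β - 1) ^ 2, by positivity, fun n hn => ?_⟩
  have second_moment := E.integral_Xi_sq_le (n := n) fun a ha =>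
    (E.hasMemoryGrowth_excessSecondMoment hd ha β_def.ge).sum_div_sq_le_rpow hβ₁ hβ₂
  calc rate p d n ^ 2 * ∫ ω, |E.Xi n ω| ^ 2 ∂P
      ≤ n / (n : ℝ) ^ (β - 1) * (d / n * (β / (β - 1) * ((n : ℝ) ^ (β - 1) / (β - 1)))) := by
        rw [rate_sq_of_gt hd hp hn]
        gcongr
    _ = d * β / (β - 1) ^ 2 := by field_simp

end ERW

theorem erw_Xi_second_moment_general
    {G : Type*} [Group G] [DecidableEq G] {Ω : Type*} [MeasurableSpace Ω]
    {P : Measure Ω} [IsProbabilityMeasure P]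
    (d : ℕ) (hd : 2 ≤ d) (p : ℝ) (hp : p ≤ 1) (E : ERW G d p Ω P) :
    (p ≤ ((d : ℝ) + 1) / (2 * d) →
      ∃ C : ℝ, 0 < C ∧ ∀ n : ℕ, 2 ≤ n →
        rate p d n ^ 2 * ∫ ω, |E.Xi n ω| ^ 2 ∂P ≤ C * Real.log n) ∧
    (((d : ℝ) + 1) / (2 * d) < p →
      ∃ C : ℝ, 0 < C ∧ ∀ n : ℕ, 1 ≤ n →
        rate p d n ^ 2 * ∫ ω, |E.Xi n ω| ^ 2 ∂P ≤ C) :=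
  ⟨fun hle => hle.lt_or_eq.elim (E.exists_rate_sq_mul_integral_Xi_sq_le_of_lt hd)
    (E.exists_rate_sq_mul_integral_Xi_sq_le_of_eq hd),
  E.exists_rate_sq_mul_integral_Xi_sq_le_of_gt hd hp⟩

/-- second moment of `Ξ n`: if `p ≤ p_d` then
`E|Ξ n|^2 ≤ C * r n ^ (-2) * log n` for `n ≥ 2`, and if `p > p_d` then
`E|Ξ n|^2 ≤ C * r n ^ (-2)` for `n ≥ 1` (stated in product form). -/
theorem erw_Xi_second_moment
    {G : Type*} [Group G] [DecidableEq G] {Ω : Type*} [MeasurableSpace Ω]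
    {P : Measure Ω} [IsProbabilityMeasure P]
    (d : ℕ) (hd : 3 ≤ d) (p : ℝ) (hp0 : 0 ≤ p) (hp1 : p < 1)
    (E : ERW G d p Ω P) :
    (p ≤ ((d : ℝ) + 1) / (2 * d) →
      ∃ C : ℝ, 0 < C ∧ ∀ n : ℕ, 2 ≤ n →
        rate p d n ^ 2 * ∫ ω, |E.Xi n ω| ^ 2 ∂P ≤ C * Real.log n) ∧
    (((d : ℝ) + 1) / (2 * d) < p →
      ∃ C : ℝ, 0 < C ∧ ∀ n : ℕ, 1 ≤ n →
        rate p d n ^ 2 * ∫ ω, |E.Xi n ω| ^ 2 ∂P ≤ C) := by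
  exact erw_Xi_second_moment_general d (by lia) p hp1.le E

end
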